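/- arXiv:1512.03732 — 2 statements merged into one kernel-verified Lean document; each statement's English description precedes it below -/
import Mathlib

section
/- If u : ℤ^d → ℂ is harmonic, then for every n ∈ ℕ one has Q_u(2n) ≤ 2·√(Q_u(n)·Q_u(4n)) + 2^{-√n}·Q_u(4n). -/
open Finset

noncomputable section

/-- The generating set of ℤ^d: the `2d` signed standard unit vectors `±e_i`. -/
def Sd (d : ℕ) : Finset (Fin d → ℤ) :=
  (Finset.univ.image fun i => Pi.single i 1) ∪ (Finset.univ.image fun i => Pi.single i (-1))

/-- `Q u n = E |u(S_n)|²` for the simple random walk on ℤ^d started at 0. -/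
noncomputable def Qd (d : ℕ) (u : (Fin d → ℤ) → ℂ) (n : ℕ) : ℝ :=
  ((2 * d : ℝ))⁻¹ ^ n * ∑ s ∈ Fintype.piFinset (fun _ : Fin n => Sd d), ‖u (∑ i, s i)‖ ^ 2

/-- The discrete Laplacian on ℤ^d. -/
noncomputable def lapD (d : ℕ) (u : (Fin d → ℤ) → ℂ) : (Fin d → ℤ) → ℂ :=
  fun x => (2 * d : ℂ)⁻¹ * ∑ s ∈ Sd d, (u (x + s) - u x)

/-!
Let `u` be harmonic. Expanding `‖u (x + t)‖ ^ 2` around `u x`, harmonicity kills the cross terms and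
gives `Δ Q_u = 𝔼 t, Q_(Δ_t u)`. Since `Δ_t u` is again harmonic, all iterated forward differences of
`Q_u` are nonnegative, so the Newton expansion `Q_u m = ∑ k, (m.choose k) * a k` has nonnegative
coefficients. It remains to compare the binomial coefficients: for `k ^ 2 ≤ n` the square of
`(2 * n).choose k` is at most `2 * n.choose k * (4 * n).choose k`, and these terms are summed by the
Cauchy–Schwarz inequality; for `k ^ 2 > n` already `(2 * n).choose k ≤ 2 ^ (-k) * (4 * n).choose k`.
-/

open scoped fwdDiff BigOperators RealInnerProductSpace

section Choose

lemma sq_descFactorial_two_mul_le (n k : ℕ) :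
    (2 * n).descFactorial k ^ 2 ≤ n ^ k * (4 * n).descFactorial k := by
  have factor_le (i : ℕ) : (2 * n - i) ^ 2 ≤ n * (4 * n - i) := by
    refine Nat.le_of_mul_le_mul_left ?_ two_pos
    calc 2 * (2 * n - i) ^ 2
        = (2 * n - i) * (2 * (2 * n - i)) := by ring
      _ ≤ 2 * n * (4 * n - i) := Nat.mul_le_mul (by omega) (by omega)
      _ = 2 * (n * (4 * n - i)) := by ring
  calc (2 * n).descFactorial k ^ 2
      = ∏ i ∈ range k, (2 * n - i) ^ 2 := by rw [Nat.descFactorial_eq_prod_range, prod_pow]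
    _ ≤ ∏ i ∈ range k, n * (4 * n - i) := prod_le_prod' fun i _ ↦ factor_le i
    _ = n ^ k * (4 * n).descFactorial k := by
      rw [← pow_card_mul_prod, card_range, Nat.descFactorial_eq_prod_range]

-- The inequality `1 - ∑ i < k, i / n ≤ ∏ i < k, (1 - i / n)`, cleared of denominators.
lemma pow_succ_le_mul_descFactorial_add (n k : ℕ) :
    n ^ (k + 1) ≤ n * n.descFactorial k + k.choose 2 * n ^ k := by
  induction k with
  | zero => simp
  | succ k ih =>
    have descFactorial_step : n * n.descFactorial k ≤ n.descFactorial (k + 1) + k * n ^ k := by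
      rw [Nat.descFactorial_succ]
      calc n * n.descFactorial k
          ≤ (n - k + k) * n.descFactorial k := by gcongr; omega
        _ = (n - k) * n.descFactorial k + k * n.descFactorial k := add_mul ..
        _ ≤ (n - k) * n.descFactorial k + k * n ^ k := by gcongr; exact Nat.descFactorial_le_pow n k
    calc n ^ (k + 1 + 1)
        = n * n ^ (k + 1) := pow_succ' ..
      _ ≤ n * (n.descFactorial (k + 1) + k * n ^ k + k.choose 2 * n ^ k) := by
          gcongr; exact ih.trans (by gcongr)
      _ = n * n.descFactorial (k + 1) + (k + 1).choose 2 * n ^ (k + 1) := by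
          rw [Nat.choose_succ_succ' k 1, Nat.choose_one_right]; ring

lemma pow_le_two_mul_descFactorial {n k : ℕ} (hk : 2 * k.choose 2 ≤ n) :
    n ^ k ≤ 2 * n.descFactorial k := by
  rcases n.eq_zero_or_pos with rfl | hn
  · rcases k with _ | k <;> simp
  · have h := pow_succ_le_mul_descFactorial_add n k
    have : 2 * k.choose 2 * n ^ k ≤ n * n ^ k := by gcongr
    refine Nat.le_of_mul_le_mul_left ?_ hn
    rw [pow_succ'] at h
    linarith

lemma sq_choose_two_mul_le {n k : ℕ} (hk : 2 * k.choose 2 ≤ n) :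
    (2 * n).choose k ^ 2 ≤ 2 * (n.choose k * (4 * n).choose k) := by
  have h : (2 * n).descFactorial k ^ 2 ≤ 2 * n.descFactorial k * (4 * n).descFactorial k :=
    (sq_descFactorial_two_mul_le n k).trans (by gcongr; exact pow_le_two_mul_descFactorial hk)
  simp only [Nat.descFactorial_eq_factorial_mul_choose] at h
  refine Nat.le_of_mul_le_mul_left ?_ (pow_pos k.factorial_pos 2)
  linarith

lemma pow_mul_choose_le (c n k : ℕ) : c ^ k * n.choose k ≤ (c * n).choose k := by
  have h : c ^ k * n.descFactorial k ≤ (c * n).descFactorial k :=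
    calc c ^ k * n.descFactorial k
        = ∏ i ∈ range k, c * (n - i) := by
          rw [← pow_card_mul_prod, card_range, Nat.descFactorial_eq_prod_range]
      _ ≤ ∏ i ∈ range k, (c * n - i) := prod_le_prod' fun i _ ↦ by
          rcases c.eq_zero_or_pos with rfl | hc
          · simp
          · rw [Nat.mul_sub]
            exact Nat.sub_le_sub_left (Nat.le_mul_of_pos_left i hc) _
      _ = (c * n).descFactorial k := (Nat.descFactorial_eq_prod_range ..).symm
  simp only [Nat.descFactorial_eq_factorial_mul_choose] at h
  exact Nat.le_of_mul_le_mul_left (by linarith) k.factorial_pos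

lemma choose_two_mul_le_sqrt_mul_add (n k : ℕ) :
    ((2 * n).choose k : ℝ) ≤ √2 * √(n.choose k * (4 * n).choose k) +
      2 ^ (-√n) * (4 * n).choose k := by
  rcases le_or_gt (k ^ 2) n with hkn | hkn
  · have two_mul_choose_le : 2 * k.choose 2 ≤ n := by
      rw [Nat.choose_two_right]
      exact (Nat.mul_div_le _ _).trans <| (Nat.mul_le_mul_left k (k.sub_le 1)).trans (by rwa [← sq])
    refine le_add_of_le_of_nonneg ?_ (by positivity)
    rw [← Real.sqrt_mul zero_le_two]
    exact Real.le_sqrt_of_sq_le (mod_cast sq_choose_two_mul_le two_mul_choose_le)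
  · have sqrt_le : √n ≤ k := Real.sqrt_le_left (by positivity) |>.2 (mod_cast hkn.le)
    refine le_add_of_nonneg_of_le (by positivity) ?_
    calc ((2 * n).choose k : ℝ)
        = 2 ^ (-(k : ℝ)) * (2 ^ k * (2 * n).choose k) := by
          rw [Real.rpow_neg zero_le_two, Real.rpow_natCast, inv_mul_cancel_left₀ (by positivity)]
      _ ≤ 2 ^ (-(k : ℝ)) * (4 * n).choose k := by
          gcongr
          have := pow_mul_choose_le 2 (2 * n) k
          rw [← mul_assoc] at this
          exact_mod_cast this
      _ ≤ 2 ^ (-√n) * (4 * n).choose k := by gcongr; exact one_le_two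

end Choose

section ForwardDifference

lemma fwdDiff_comm {G A : Type*} [AddCommMonoid G] [AddCommGroup A] (s t : G) (u : G → A) :
    Δ_[s] (Δ_[t] u) = Δ_[t] (Δ_[s] u) := by
  funext x
  simp only [fwdDiff, add_right_comm x s t]
  abel

lemma eq_sum_choose_smul_fwdDiff_iter {A : Type*} [AddCommGroup A] (f : ℕ → A) {m N : ℕ}
    (hm : m ≤ N) : f m = ∑ k ∈ range (N + 1), m.choose k • (Δ_[1])^[k] f 0 := by
  have newton := shift_eq_sum_fwdDiff_iter 1 f m 0
  rw [zero_add, smul_eq_mul, mul_one] at newton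
  rw [newton]
  refine sum_subset (range_mono (by omega)) fun k _ hk ↦ ?_
  rw [Nat.choose_eq_zero_of_lt (by simpa using hk), zero_smul]

lemma three_circles_of_fwdDiff_iter_nonneg {f : ℕ → ℝ} (hf : ∀ k, 0 ≤ (Δ_[1])^[k] f 0) (n : ℕ) :
    f (2 * n) ≤ √2 * √(f n * f (4 * n)) + 2 ^ (-√n) * f (4 * n) := by
  set a : ℕ → ℝ := fun k ↦ (Δ_[1])^[k] f 0
  have newton {m : ℕ} (hm : m ≤ 4 * n) : f m = ∑ k ∈ range (4 * n + 1), m.choose k * a k := by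
    simpa only [nsmul_eq_mul] using eq_sum_choose_smul_fwdDiff_iter f hm
  have term_nonneg (m k : ℕ) : 0 ≤ m.choose k * a k := mul_nonneg (Nat.cast_nonneg _) (hf k)
  have term_le (k : ℕ) : (2 * n).choose k * a k ≤
      √2 * (√(n.choose k * a k) * √((4 * n).choose k * a k)) +
        2 ^ (-√n) * ((4 * n).choose k * a k) := by
    have sqrt_mul_sqrt : √(n.choose k * a k) * √((4 * n).choose k * a k) =
        √(n.choose k * (4 * n).choose k) * a k := by
      rw [← Real.sqrt_mul (term_nonneg n k), mul_mul_mul_comm, Real.sqrt_mul (by positivity),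
        Real.sqrt_mul_self (hf k)]
    rw [sqrt_mul_sqrt, ← mul_assoc, ← mul_assoc, ← add_mul]
    exact mul_le_mul_of_nonneg_right (choose_two_mul_le_sqrt_mul_add n k) (hf k)
  have cauchy_schwarz : ∑ k ∈ range (4 * n + 1), √(n.choose k * a k) * √((4 * n).choose k * a k) ≤
      √(f n * f (4 * n)) := by
    rw [newton (m := n) (by omega), newton le_rfl,
      Real.sqrt_mul (sum_nonneg fun k _ ↦ term_nonneg n k)]
    exact Real.sum_sqrt_mul_sqrt_le _ (term_nonneg n) (term_nonneg (4 * n))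
  calc f (2 * n)
      = ∑ k ∈ range (4 * n + 1), (2 * n).choose k * a k := newton (by omega)
    _ ≤ ∑ k ∈ range (4 * n + 1), (√2 * (√(n.choose k * a k) * √((4 * n).choose k * a k)) +
          2 ^ (-√n) * ((4 * n).choose k * a k)) := sum_le_sum fun k _ ↦ term_le k
    _ = √2 * ∑ k ∈ range (4 * n + 1), √(n.choose k * a k) * √((4 * n).choose k * a k) +
          2 ^ (-√n) * f (4 * n) := by
        rw [sum_add_distrib, ← mul_sum, ← mul_sum, ← newton le_rfl]
    _ ≤ √2 * √(f n * f (4 * n)) + 2 ^ (-√n) * f (4 * n) := by gcongr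

end ForwardDifference

section RandomWalk

lemma expect_piFinset_fin_succ {α M : Type*} [AddCommMonoid M] [Module ℚ≥0 M] (S : Finset α)
    (n : ℕ) (f : (Fin (n + 1) → α) → M) :
    𝔼 s ∈ Fintype.piFinset (fun _ : Fin (n + 1) ↦ S), f s =
      𝔼 s ∈ Fintype.piFinset (fun _ : Fin n ↦ S), 𝔼 t ∈ S, f (Fin.cons t s) := by
  rw [expect_comm, ← expect_product']
  refine (expect_equiv (Fin.consEquiv fun _ ↦ α) (fun p ↦ ?_) fun p _ ↦ rfl).symm
  simp [Fin.forall_fin_succ]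

variable {G : Type*} [AddCommMonoid G]

/-- Harmonicity for the random walk on `G` with uniformly distributed steps in `S`, expressed by
the vanishing of the unnormalised Laplacian `∑ s ∈ S, Δ_[s]`. -/
def IsWalkHarmonic {A : Type*} [AddCommGroup A] (S : Finset G) (u : G → A) : Prop :=
  ∑ s ∈ S, Δ_[s] u = 0

protected lemma IsWalkHarmonic.fwdDiff {A : Type*} [AddCommGroup A] {S : Finset G} {u : G → A}
    (hu : IsWalkHarmonic S u) (t : G) : IsWalkHarmonic S (Δ_[t] u) := by
  simp only [IsWalkHarmonic, fwdDiff_comm _ t]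
  rw [← fwdDiff_finsetSum, hu]
  exact fwdDiff_const t 0

variable {E : Type*} [NormedAddCommGroup E]

/-- The mean square of `u` at time `n` along the random walk on `G` started at `0`, with independent
uniformly distributed steps in `S`. -/
def walkMeanSq (S : Finset G) (u : G → E) (n : ℕ) : ℝ :=
  𝔼 s ∈ Fintype.piFinset (fun _ : Fin n ↦ S), ‖u (∑ i, s i)‖ ^ 2

lemma walkMeanSq_nonneg (S : Finset G) (u : G → E) (n : ℕ) : 0 ≤ walkMeanSq S u n :=
  expect_nonneg fun _ _ ↦ by positivity

lemma walkMeanSq_succ (S : Finset G) (u : G → E) (n : ℕ) :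
    walkMeanSq S u (n + 1) =
      𝔼 s ∈ Fintype.piFinset (fun _ : Fin n ↦ S), 𝔼 t ∈ S, ‖u (∑ i, s i + t)‖ ^ 2 := by
  simp only [walkMeanSq, expect_piFinset_fin_succ, Fin.sum_univ_succ, Fin.cons_zero, Fin.cons_succ,
    add_comm]

variable [InnerProductSpace ℝ E]

lemma IsWalkHarmonic.expect_norm_sq_fwdDiff {S : Finset G} (hS : S.Nonempty) {u : G → E}
    (hu : IsWalkHarmonic S u) (x : G) :
    𝔼 t ∈ S, ‖u (x + t)‖ ^ 2 = ‖u x‖ ^ 2 + 𝔼 t ∈ S, ‖Δ_[t] u x‖ ^ 2 := by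
  have sum_fwdDiff : ∑ t ∈ S, Δ_[t] u x = 0 := by simpa using congrFun hu x
  have polarization (t : G) :
      ‖u (x + t)‖ ^ 2 = ‖u x‖ ^ 2 + 2 * ⟪u x, Δ_[t] u x⟫ + ‖Δ_[t] u x‖ ^ 2 := by
    rw [← norm_add_sq_real, fwdDiff, add_sub_cancel]
  have expect_inner : 𝔼 t ∈ S, 2 * ⟪u x, Δ_[t] u x⟫ = 0 := by
    rw [expect, ← mul_sum, ← inner_sum, sum_fwdDiff, inner_zero_right, mul_zero, smul_zero]
  simp only [polarization, expect_add_distrib, expect_const hS, expect_inner, add_zero]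

lemma IsWalkHarmonic.fwdDiff_walkMeanSq {S : Finset G} (hS : S.Nonempty) {u : G → E}
    (hu : IsWalkHarmonic S u) :
    Δ_[1] (walkMeanSq S u) = 𝔼 t ∈ S, walkMeanSq S (Δ_[t] u) := by
  funext n
  calc walkMeanSq S u (n + 1) - walkMeanSq S u n
      = 𝔼 s ∈ Fintype.piFinset (fun _ : Fin n ↦ S), 𝔼 t ∈ S, ‖Δ_[t] u (∑ i, s i)‖ ^ 2 := by
        simp only [walkMeanSq_succ, hu.expect_norm_sq_fwdDiff hS, expect_add_distrib]
        exact add_sub_cancel_left ..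
    _ = 𝔼 t ∈ S, walkMeanSq S (Δ_[t] u) n := expect_comm ..
    _ = (𝔼 t ∈ S, walkMeanSq S (Δ_[t] u)) n := (expect_apply ..).symm

lemma IsWalkHarmonic.fwdDiff_iter_walkMeanSq_nonneg {S : Finset G} (hS : S.Nonempty) {u : G → E}
    (hu : IsWalkHarmonic S u) (k n : ℕ) : 0 ≤ (Δ_[1])^[k] (walkMeanSq S u) n := by
  induction k generalizing u with
  | zero => exact walkMeanSq_nonneg S u n
  | succ k ih =>
    rw [Function.iterate_succ_apply, hu.fwdDiff_walkMeanSq hS, expect, fwdDiff_iter_const_smul,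
      fwdDiff_iter_finsetSum, ← expect, expect_apply]
    exact expect_nonneg fun t _ ↦ ih (hu.fwdDiff t)

theorem three_circles_with_error_general {S : Finset G} (hS : S.Nonempty) {u : G → E}
    (hu : IsWalkHarmonic S u) (n : ℕ) :
    walkMeanSq S u (2 * n) ≤ √2 * √(walkMeanSq S u n * walkMeanSq S u (4 * n)) +
      2 ^ (-√n) * walkMeanSq S u (4 * n) :=
  three_circles_of_fwdDiff_iter_nonneg (fun k ↦ hu.fwdDiff_iter_walkMeanSq_nonneg hS k 0) n

end RandomWalk

section Lattice

variable {d : ℕ}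

lemma card_Sd (d : ℕ) : #(Sd d) = 2 * d := by
  have single_injective {a : ℤ} (ha : a ≠ 0) :
      Function.Injective fun i : Fin d ↦ (Pi.single i a : Fin d → ℤ) :=
    fun i j h ↦ by simpa [Pi.single_apply, ha] using congrFun h i
  have single_disjoint : Disjoint (univ.image fun i : Fin d ↦ (Pi.single i 1 : Fin d → ℤ))
      (univ.image fun i ↦ Pi.single i (-1)) := by
    simp only [disjoint_left, mem_image, mem_univ, true_and, not_exists, forall_exists_index,
      forall_apply_eq_imp_iff]
    exact fun i j h ↦ by simpa using congrArg (fun x : Fin d → ℤ ↦ ∑ l, x l) h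
  rw [Sd, card_union_of_disjoint single_disjoint,
    card_image_of_injective _ (single_injective one_ne_zero),
    card_image_of_injective _ (single_injective (by decide)), card_univ, Fintype.card_fin, two_mul]

lemma Sd_nonempty (hd : 1 ≤ d) : (Sd d).Nonempty := by
  rw [← card_pos, card_Sd]
  omega

lemma Qd_eq_walkMeanSq (u : (Fin d → ℤ) → ℂ) (n : ℕ) : Qd d u n = walkMeanSq (Sd d) u n := by
  rw [Qd, walkMeanSq, expect_eq_sum_div_card, Fintype.card_piFinset_const, card_Sd, inv_pow,
    inv_mul_eq_div]
  push_cast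
  rfl

lemma isWalkHarmonic_of_lapD_eq_zero {u : (Fin d → ℤ) → ℂ} (hu : lapD d u = 0) :
    IsWalkHarmonic (Sd d) u := by
  funext x
  rcases d.eq_zero_or_pos with rfl | hd
  · simp [Sd]
  · have laplacian_eq_zero := congrFun hu x
    have inv_ne_zero : (2 * d : ℂ)⁻¹ ≠ 0 := by simpa using hd.ne'
    rw [Finset.sum_apply]
    exact (mul_eq_zero.1 laplacian_eq_zero).resolve_left inv_ne_zero

end Lattice

theorem three_circles_with_error (d : ℕ) (hd : 1 ≤ d)
    (u : (Fin d → ℤ) → ℂ) (hu : lapD d u = 0) (n : ℕ) :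
    Qd d u (2 * n) ≤ 2 * Real.sqrt (Qd d u n * Qd d u (4 * n)) +
      (2 : ℝ) ^ (-Real.sqrt n) * Qd d u (4 * n) := by
  simp only [Qd_eq_walkMeanSq]
  refine (three_circles_with_error_general (Sd_nonempty hd)
    (isWalkHarmonic_of_lapD_eq_zero hu) n).trans ?_
  gcongr
  exact Real.sqrt_le_iff.2 (by norm_num)
end
end

section
/- For every k ∈ ℕ and every j with 0 ≤ j ≤ k, the Newton coefficient satisfies a_{k,j} = 4^{-j}·Q̃_j(k−j). In particular a_{k,0} = 1. -/
open Finset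

noncomputable section

/-- The generating set `S = {(1,0),(-1,0),(0,1),(0,-1)}` of ℤ². -/
def Sfin : Finset (ℤ × ℤ) := {(1,0), (-1,0), (0,1), (0,-1)}

/-- `Q u n = E |u(S_n)|²` for the simple random walk on ℤ² started at 0. -/
noncomputable def Q (u : ℤ × ℤ → ℂ) (n : ℕ) : ℝ :=
  (4 : ℝ)⁻¹ ^ n * ∑ s ∈ Fintype.piFinset (fun _ : Fin n => Sfin), ‖u (∑ i, s i)‖ ^ 2

/-- Generalized binomial coefficient `binom(x,k) = (1/k!)·∏_{j<k}(x-j)`. -/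
noncomputable def gbinom (x : ℝ) (k : ℕ) : ℝ :=
  (∏ j ∈ Finset.range k, (x - j)) / (Nat.factorial k)

/-- `F_k(x) = binom(x + (k-1)/2, k)`, a discretization of `x^k/k!`. -/
noncomputable def F (k : ℕ) (x : ℝ) : ℝ := gbinom (x + ((k : ℝ) - 1) / 2) k

/-- `Z_k(x,y) = Σ_{l=0}^k i^l F_{k-l}(x) F_l(y)`, a harmonic discretization of `z^k/k!`. -/
noncomputable def Z (k : ℕ) (x y : ℝ) : ℂ :=
  ∑ l ∈ Finset.range (k + 1), Complex.I ^ l * (F (k - l) x : ℂ) * (F l y : ℂ)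

/-- `Z̃_k(x,y) = 2^k Z_k(x/2, y/2)`. -/
noncomputable def Ztilde (k : ℕ) (x y : ℝ) : ℂ := 2 ^ k * Z k (x / 2) (y / 2)

/-- `Q_k := Q_{Z_k}` (with `Z_k` restricted to ℤ²). -/
noncomputable def Qk (k : ℕ) (n : ℕ) : ℝ := Q (fun p => Z k p.1 p.2) n

/-- `Q̃_k := Q_{Z̃_k}` (with `Z̃_k` restricted to ℤ²). -/
noncomputable def Qtilde (k : ℕ) (n : ℕ) : ℝ := Q (fun p => Ztilde k p.1 p.2) n

/-- Forward difference operator: `fwd f n = f (n+1) - f n`. -/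
def fwd (f : ℕ → ℝ) : ℕ → ℝ := fun n => f (n + 1) - f n

/-- Newton coefficients `a_{k,j} = Q_k^{(k-j)}(0)`. -/
noncomputable def a (k j : ℕ) : ℝ := fwd^[k - j] (Qk k) 0

/-!
Let `A` and `B` be the transition operators of the simple random walks on `ℝ²` with steps of length
`1` and `1/2`. Then `Q_k(n) = (Aⁿ|Z_k|²)(0)`, so taking the forward difference in `n` amounts to
applying the discrete Laplacian `A - 1`. Since `Z_{k+1}` is a discrete primitive of `Z_k`, it is
harmonic, and the Leibniz rule gives `(A - 1)|Z_{k+1}|² = B|Z_k|²`. As `A` and `B` commute,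
`(A - 1)^(k-j)|Z_k|² = B^(k-j)|Z_j|²`; evaluated at `0`, the right-hand side is the mean of
`|Z_j(S_{k-j}/2)|² = 4^{-j}|Z̃_j(S_{k-j})|²`.
-/

open scoped BigOperators

section LinearAlgebra

variable {R M N : Type*} [Semiring R]

lemma fwdDiff_iter_linearMap_pow [AddCommGroup M] [AddCommGroup N] [Module R M] [Module R N]
    (l : M →ₗ[R] N) (E : Module.End R M) (x : M) (m : ℕ) :
    (fwdDiff 1)^[m] (fun n : ℕ ↦ l ((E ^ n) x)) = fun n ↦ l ((E ^ n) (((E - 1) ^ m) x)) := by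
  induction m with
  | zero => simp
  | succ m ih =>
    rw [Function.iterate_succ_apply', ih]
    ext n
    simp [fwdDiff, pow_succ, pow_succ' (E - 1)]

lemma pow_apply_add_eq_pow_apply [AddCommMonoid M] [Module R M] {A B : Module.End R M}
    (hAB : Commute A B) {v : ℕ → M} (hv : ∀ k, A (v (k + 1)) = B (v k)) (k m : ℕ) :
    (A ^ m) (v (k + m)) = (B ^ m) (v k) := by
  induction m with
  | zero => rfl
  | succ m ih =>
    calc (A ^ (m + 1)) (v (k + (m + 1)))
        = (A ^ m * B) (v (k + m)) := by
          rw [pow_succ, Module.End.mul_apply, Module.End.mul_apply, ← add_assoc, hv]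
      _ = B ((A ^ m) (v (k + m))) := by rw [(hAB.pow_left m).eq, Module.End.mul_apply]
      _ = (B ^ (m + 1)) (v k) := by rw [ih, pow_succ', Module.End.mul_apply]

end LinearAlgebra

section WalkAverage

variable {ι κ G M : Type*} [AddCommMonoid M] [Module ℚ≥0 M]

/-- The transition operator `f ↦ (p ↦ E f(p + v i))` of the random walk on `G` whose steps are
`v i`, for `i` uniformly distributed in `T`. -/
def walkAverage [Add G] (T : Finset ι) (v : ι → G) : Module.End ℚ≥0 (G → M) where
  toFun f p := 𝔼 i ∈ T, f (p + v i)
  map_add' f g := by ext p; exact expect_add_distrib _ _ _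
  map_smul' c f := by ext p; exact (smul_expect c T fun i ↦ f (p + v i)).symm

lemma walkAverage_apply [Add G] (T : Finset ι) (v : ι → G) (f : G → M) (p : G) :
    walkAverage T v f p = 𝔼 i ∈ T, f (p + v i) := rfl

lemma commute_walkAverage [AddCommSemigroup G] (T : Finset ι) (v : ι → G) (U : Finset κ)
    (w : κ → G) :
    Commute (walkAverage (M := M) T v) (walkAverage U w) := by
  ext f p
  simp only [Module.End.mul_apply, walkAverage_apply]
  rw [expect_comm]
  simp only [add_right_comm]

lemma walkAverage_pow_apply [AddCommMonoid G] (T : Finset ι) (v : ι → G) (n : ℕ) (f : G → M)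
    (p : G) :
    (walkAverage T v ^ n) f p
      = 𝔼 s ∈ Fintype.piFinset (fun _ : Fin n ↦ T), f (p + ∑ i, v (s i)) := by
  induction n generalizing p with
  | zero => simp
  | succ n ih =>
    simp only [pow_succ', Module.End.mul_apply, walkAverage_apply, ih]
    rw [← expect_product' T _ fun i (s : Fin n → ι) ↦ f (p + v i + ∑ j, v (s j))]
    refine expect_equiv (Fin.consEquiv fun _ ↦ ι) (fun q ↦ ?_) fun q _ ↦ ?_
    · simp [Fin.consEquiv, Fin.forall_fin_succ]
    · simp [Fin.consEquiv, Fin.sum_univ_succ, add_assoc]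

lemma card_Sfin : #Sfin = 4 := rfl

lemma walkAverage_Sfin_apply [AddGroup G] (φ : ℤ × ℤ →+ G) (f : G → ℝ) (p : G) :
    walkAverage Sfin φ f p = (f (p + φ (1, 0)) + f (p - φ (1, 0))
      + f (p + φ (0, 1)) + f (p - φ (0, 1))) / 4 := by
  have hx : φ (-1, 0) = -φ (1, 0) := by rw [← map_neg]; rfl
  have hy : φ (0, -1) = -φ (0, 1) := by rw [← map_neg]; rfl
  rw [walkAverage_apply, expect_eq_sum_div_card, card_Sfin]
  simp [Sfin, hx, hy, ← sub_eq_add_neg, add_assoc]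

end WalkAverage

section CentralDifference

variable {G V : Type*} [AddCommGroup G]

/-- The central difference of `f` with half-step `e`, a discrete derivative along `2e`. -/
def centralDiff [Sub V] (e : G) (f : G → V) (p : G) : V := f (p + e) - f (p - e)

lemma centralDiff_comm [AddCommGroup V] (d e : G) (f : G → V) :
    centralDiff d (centralDiff e f) = centralDiff e (centralDiff d f) := by
  ext p
  simp only [centralDiff, add_right_comm p d e, sub_right_comm p d e, sub_add_eq_add_sub]
  abel

lemma norm_sq_add_two_nsmul_add_norm_sq_sub_two_nsmul [NormedAddCommGroup V] [InnerProductSpace ℝ V]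
    (e : G) (f : G → V) (p : G) :
    ‖f (p + 2 • e)‖ ^ 2 + ‖f (p - 2 • e)‖ ^ 2
      = 2 * ‖f p‖ ^ 2 + ‖centralDiff e f (p + e)‖ ^ 2 + ‖centralDiff e f (p - e)‖ ^ 2
        + 2 * inner ℝ (f p) (centralDiff e (centralDiff e f) p) := by
  have hadd : f (p + 2 • e) = f p + centralDiff e f (p + e) := by
    simp [centralDiff, two_nsmul, add_assoc]
  have hsub : f (p - 2 • e) = f p - centralDiff e f (p - e) := by
    simp [centralDiff, two_nsmul, sub_sub]
  rw [hadd, hsub, norm_add_sq_real, norm_sub_sq_real, centralDiff.eq_def e (centralDiff e f),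
    inner_sub_right]
  ring

end CentralDifference

section DiscretePrimitive

variable {G : Type*} [AddCommGroup G] {φ : ℤ × ℤ →+ G} {f g : G → ℂ}

/-- `f` is a primitive of `g` in the sense of discrete complex analysis: `∂f/∂x = g` and
`∂f/∂y = i g`, where the partial derivatives are the central differences with half-steps
`φ (1, 0)` and `φ (0, 1)`. -/
structure IsDiscretePrimitive (φ : ℤ × ℤ →+ G) (f g : G → ℂ) : Prop where
  centralDiff_fst : centralDiff (φ (1, 0)) f = g
  centralDiff_snd : centralDiff (φ (0, 1)) f = Complex.I • g

lemma IsDiscretePrimitive.harmonic (h : IsDiscretePrimitive φ f g) (p : G) :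
    centralDiff (φ (1, 0)) (centralDiff (φ (1, 0)) f) p
      + centralDiff (φ (0, 1)) (centralDiff (φ (0, 1)) f) p = 0 := by
  have centralDiff_I_smul (e : G) :
      centralDiff e (Complex.I • g) = Complex.I • centralDiff e g := by
    ext q; simp [centralDiff, mul_sub]
  have cauchyRiemann : centralDiff (φ (0, 1)) g = Complex.I • centralDiff (φ (1, 0)) g := by
    rw [← centralDiff_I_smul, ← h.centralDiff_snd, centralDiff_comm, h.centralDiff_fst]
  rw [h.centralDiff_fst, h.centralDiff_snd, centralDiff_I_smul, cauchyRiemann, smul_smul]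
  simp

lemma IsDiscretePrimitive.laplacian_norm_sq (h : IsDiscretePrimitive φ f g) :
    (walkAverage Sfin ⇑(2 • φ) - 1 : Module.End ℚ≥0 (G → ℝ)) (fun p ↦ ‖f p‖ ^ 2)
      = walkAverage Sfin φ fun p ↦ ‖g p‖ ^ 2 := by
  ext p
  have hx := norm_sq_add_two_nsmul_add_norm_sq_sub_two_nsmul (φ (1, 0)) f p
  have hy := norm_sq_add_two_nsmul_add_norm_sq_sub_two_nsmul (φ (0, 1)) f p
  have hharm := congrArg (inner ℝ (f p)) (h.harmonic p)
  rw [inner_add_right, inner_zero_right] at hharm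
  have hg (q : G) : ‖centralDiff (φ (0, 1)) f q‖ = ‖g q‖ := by simp [h.centralDiff_snd]
  simp only [h.centralDiff_fst] at hx hharm
  simp only [hg] at hy
  simp only [LinearMap.sub_apply, Pi.sub_apply, Module.End.one_apply, walkAverage_Sfin_apply,
    AddMonoidHom.nsmul_apply]
  linear_combination (hx + hy + 2 * hharm) / 4

end DiscretePrimitive

section MeanSquare

lemma Q_eq_expect (u : ℤ × ℤ → ℂ) (n : ℕ) :
    Q u n = 𝔼 s ∈ Fintype.piFinset (fun _ : Fin n ↦ Sfin), ‖u (∑ i, s i)‖ ^ 2 := by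
  simp [Q, expect_eq_sum_div_card, Fintype.card_piFinset, card_Sfin, div_eq_inv_mul]

lemma Q_const (c : ℂ) (n : ℕ) : Q (fun _ ↦ c) n = ‖c‖ ^ 2 := by
  have hne : (Fintype.piFinset fun _ : Fin n ↦ Sfin).Nonempty :=
    Fintype.piFinset_nonempty.2 fun _ ↦ insert_nonempty _ _
  rw [Q_eq_expect, expect_const hne]

lemma Q_const_mul (c : ℂ) (u : ℤ × ℤ → ℂ) (n : ℕ) :
    Q (fun p ↦ c * u p) n = ‖c‖ ^ 2 * Q u n := by
  simp only [Q_eq_expect, norm_mul, mul_pow, mul_expect]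

lemma Q_comp_eq_walkAverage_pow {G : Type*} [AddCommMonoid G] (φ : ℤ × ℤ →+ G) (u : G → ℂ)
    (n : ℕ) : Q (u ∘ φ) n = (walkAverage Sfin φ ^ n) (fun p ↦ ‖u p‖ ^ 2) 0 := by
  simp [Q_eq_expect, walkAverage_pow_apply]

lemma fwd_eq_fwdDiff : fwd = fwdDiff 1 := rfl

theorem fwd_iter_Q_comp_two_nsmul {G : Type*} [AddCommGroup G] {φ : ℤ × ℤ →+ G}
    {u : ℕ → G → ℂ} (hu : ∀ k, IsDiscretePrimitive φ (u (k + 1)) (u k)) (k m : ℕ) :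
    fwd^[m] (Q (u (k + m) ∘ ⇑(2 • φ))) 0 = Q (u k ∘ φ) m := by
  set A : Module.End ℚ≥0 (G → ℝ) := walkAverage Sfin ⇑(2 • φ)
  set B : Module.End ℚ≥0 (G → ℝ) := walkAverage Sfin φ
  have hcomm : Commute (A - 1) B :=
    (commute_walkAverage _ _ _ _).sub_left (Commute.one_left B)
  let evalZero : (G → ℝ) →ₗ[ℚ≥0] ℝ := LinearMap.proj 0
  have hQ : Q (u (k + m) ∘ ⇑(2 • φ))
      = fun n ↦ evalZero ((A ^ n) fun p ↦ ‖u (k + m) p‖ ^ 2) :=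
    funext (Q_comp_eq_walkAverage_pow _ _)
  calc fwd^[m] (Q (u (k + m) ∘ ⇑(2 • φ))) 0
      = ((A - 1) ^ m) (fun p ↦ ‖u (k + m) p‖ ^ 2) 0 := by
        rw [hQ, fwd_eq_fwdDiff, fwdDiff_iter_linearMap_pow]; rfl
    _ = (B ^ m) (fun p ↦ ‖u k p‖ ^ 2) 0 :=
        congrFun (pow_apply_add_eq_pow_apply hcomm (v := fun j p ↦ ‖u j p‖ ^ 2)
          (fun j ↦ (hu j).laplacian_norm_sq) k m) 0
    _ = Q (u k ∘ φ) m := (Q_comp_eq_walkAverage_pow φ _ m).symm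

end MeanSquare

section DiscretePowers

lemma gbinom_eq_ringChoose (x : ℝ) (k : ℕ) : gbinom x k = Ring.choose x k := by
  rw [gbinom, ← descPochhammer_eval_eq_prod_range, ← descPochhammer_map (algebraMap ℤ ℝ),
    Polynomial.eval_map_algebraMap, Polynomial.aeval_eq_smeval, Ring.choose_eq_smul,
    div_eq_inv_mul, smul_eq_mul]

lemma F_zero (x : ℝ) : F 0 x = 1 := by simp [F, gbinom]

lemma F_succ_add_half_sub_sub_half (k : ℕ) (x : ℝ) :
    F (k + 1) (x + 1 / 2) - F (k + 1) (x - 1 / 2) = F k x := by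
  have hadd : x + 1 / 2 + (((k + 1 : ℕ) : ℝ) - 1) / 2 = x + ((k : ℝ) - 1) / 2 + 1 := by
    push_cast; ring
  have hsub : x - 1 / 2 + (((k + 1 : ℕ) : ℝ) - 1) / 2 = x + ((k : ℝ) - 1) / 2 := by
    push_cast; ring
  simp only [F, gbinom_eq_ringChoose, hadd, hsub, Ring.choose_succ_succ, add_sub_cancel_right]

lemma Z_zero (x y : ℝ) : Z 0 x y = 1 := by simp [Z, F_zero]

lemma Z_succ_add_half_sub_sub_half_fst (k : ℕ) (x y : ℝ) :
    Z (k + 1) (x + 1 / 2) y - Z (k + 1) (x - 1 / 2) y = Z k x y := by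
  simp only [Z, sum_range_succ _ (k + 1), Nat.sub_self, F_zero, add_sub_add_right_eq_sub,
    ← sum_sub_distrib]
  refine sum_congr rfl fun l hl ↦ ?_
  rw [Nat.succ_sub (mem_range_succ_iff.1 hl), ← F_succ_add_half_sub_sub_half (k - l) x]
  push_cast
  ring

lemma Z_succ_add_half_sub_sub_half_snd (k : ℕ) (x y : ℝ) :
    Z (k + 1) x (y + 1 / 2) - Z (k + 1) x (y - 1 / 2) = Complex.I * Z k x y := by
  simp only [Z, sum_range_succ' _ (k + 1), F_zero, add_sub_add_right_eq_sub, ← sum_sub_distrib,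
    mul_sum]
  refine sum_congr rfl fun l _ ↦ ?_
  rw [Nat.add_sub_add_right, ← F_succ_add_half_sub_sub_half l y]
  push_cast
  ring

/-- The embedding `p ↦ p / 2` of `ℤ²` in `ℝ²`. The lattice it parametrizes carries the central
differences of `Z_k` and the walk of `Z̃_k`; its double is the inclusion of `ℤ²` in `ℝ²`. -/
def halfLattice : ℤ × ℤ →+ ℝ × ℝ where
  toFun p := (p.1 / 2, p.2 / 2)
  map_zero' := by simp
  map_add' p q := by simp [add_div]

lemma isDiscretePrimitive_Z_succ (k : ℕ) :
    IsDiscretePrimitive halfLattice (Function.uncurry (Z (k + 1))) (Function.uncurry (Z k)) where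
  centralDiff_fst := by
    ext ⟨x, y⟩
    simpa [centralDiff, halfLattice] using Z_succ_add_half_sub_sub_half_fst k x y
  centralDiff_snd := by
    ext ⟨x, y⟩
    simpa [centralDiff, halfLattice] using Z_succ_add_half_sub_sub_half_snd k x y

lemma Qk_eq_Q_comp (k : ℕ) : Qk k = Q (Function.uncurry (Z k) ∘ ⇑(2 • halfLattice)) := by
  have htwo (p : ℤ × ℤ) : (2 • halfLattice) p = ((p.1 : ℝ), (p.2 : ℝ)) := by
    ext <;> simp [halfLattice, mul_div_cancel₀]
  ext n
  simp only [Qk, Function.comp_def, htwo, Function.uncurry_apply_pair]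

lemma Qtilde_eq_Q_comp (j n : ℕ) :
    Qtilde j n = 4 ^ j * Q (Function.uncurry (Z j) ∘ halfLattice) n := by
  have hnorm : ‖(2 : ℂ) ^ j‖ ^ 2 = 4 ^ j := by
    rw [norm_pow, Complex.norm_ofNat, pow_right_comm]; norm_num
  rw [← hnorm, ← Q_const_mul]
  rfl

lemma Qtilde_zero (n : ℕ) : Qtilde 0 n = 1 := by
  simp [Qtilde, Ztilde, Z_zero, Q_const]

end DiscretePowers

theorem Qk_recursive :
    (∀ k j : ℕ, j ≤ k → a k j = (4 : ℝ)⁻¹ ^ j * Qtilde j (k - j)) ∧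
    (∀ k : ℕ, a k 0 = 1) := by
  have newton (k j : ℕ) (hj : j ≤ k) : a k j = (4 : ℝ)⁻¹ ^ j * Qtilde j (k - j) :=
    calc a k j = fwd^[k - j] (Q (Function.uncurry (Z (j + (k - j))) ∘ ⇑(2 • halfLattice))) 0 := by
          rw [a, Qk_eq_Q_comp, Nat.add_sub_cancel' hj]
      _ = Q (Function.uncurry (Z j) ∘ halfLattice) (k - j) :=
          fwd_iter_Q_comp_two_nsmul (u := fun k ↦ Function.uncurry (Z k))
            isDiscretePrimitive_Z_succ j (k - j)
      _ = (4 : ℝ)⁻¹ ^ j * Qtilde j (k - j) := by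
          rw [Qtilde_eq_Q_comp, inv_pow, inv_mul_cancel_left₀ (by positivity)]
  refine ⟨newton, fun k ↦ ?_⟩
  rw [newton k 0 (Nat.zero_le k), Qtilde_zero, pow_zero, one_mul]
end
end
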